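/- arXiv:2405.20010 — 7 statements merged into one kernel-verified Lean document; each statement's English description precedes it below -/
import Mathlib

section
/- A flow with respect to a system of half-spaces crosses each hyperplane at most once; consequently every flow has length at most n. Precisely: let α_1,…,α_n be nonzero linear forms on ℝ^ℓ with ⋂_{i=1}^n ker α_i = {0} and ε ∈ {+1,−1}^n. If (C_0, C_1, …, C_k) is a flow with respect to h(ε), with C_{p−1} and C_p separated by the unique hyperplane H_{i_p}, then the indices i_1,…,i_k are pairwise distinct; in particular k ≤ n. -/
noncomputable section

/-- Real vector space `ℝ^ℓ`. -/
abbrev Vsp (ℓ : ℕ) : Type := EuclideanSpace ℝ (Fin ℓ)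

/-- The complement of the union of the hyperplanes `ker (α i)`. -/
def cmpl {ℓ n : ℕ} (α : Fin n → (Vsp ℓ →ₗ[ℝ] ℝ)) : Set (Vsp ℓ) := {x | ∀ i, α i x ≠ 0}

/-- `C` is a chamber: a connected component of the complement of the arrangement. -/
def IsChamber {ℓ n : ℕ} (α : Fin n → (Vsp ℓ →ₗ[ℝ] ℝ)) (C : Set (Vsp ℓ)) : Prop :=
  ∃ x ∈ cmpl α, C = connectedComponentIn (cmpl α) x

/-- The linear form `f` takes the same sign on `C` and `C'`. -/
def SameSign {ℓ : ℕ} (f : Vsp ℓ →ₗ[ℝ] ℝ) (C C' : Set (Vsp ℓ)) : Prop :=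
  ((∀ x ∈ C, 0 < f x) ∧ (∀ x ∈ C', 0 < f x)) ∨ ((∀ x ∈ C, f x < 0) ∧ (∀ x ∈ C', f x < 0))

/-- The linear form `f` takes opposite signs on `C` and `C'`. -/
def OppositeSign {ℓ : ℕ} (f : Vsp ℓ →ₗ[ℝ] ℝ) (C C' : Set (Vsp ℓ)) : Prop :=
  ((∀ x ∈ C, 0 < f x) ∧ (∀ x ∈ C', f x < 0)) ∨ ((∀ x ∈ C, f x < 0) ∧ (∀ x ∈ C', 0 < f x))

/-- The chambers `C` and `C'` are adjacent, separated by the unique hyperplane `ker (α j)`. -/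
def SeparatedBy {ℓ n : ℕ} (α : Fin n → (Vsp ℓ →ₗ[ℝ] ℝ)) (j : Fin n)
    (C C' : Set (Vsp ℓ)) : Prop :=
  IsChamber α C ∧ IsChamber α C' ∧ OppositeSign (α j) C C' ∧
    ∀ m : Fin n, m ≠ j → SameSign (α m) C C'

/-- A flow with respect to a system of half-spaces crosses each hyperplane at most once;
consequently every flow has length at most `n`. -/
theorem flow_crosses_each_hyperplane_once (ℓ n : ℕ) (α : Fin n → (Vsp ℓ →ₗ[ℝ] ℝ))
    (hα : ∀ i, α i ≠ 0)
    (hess : (⋂ i, (LinearMap.ker (α i) : Set (Vsp ℓ))) = {0})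
    (ε : Fin n → ℝ) (hε : ∀ i, ε i = 1 ∨ ε i = -1)
    (k : ℕ) (C : Fin (k + 1) → Set (Vsp ℓ)) (idx : Fin k → Fin n)
    (hflow : ∀ p : Fin k,
      SeparatedBy α (idx p) (C p.castSucc) (C p.succ) ∧
      C p.succ ⊆ {x | 0 < ε (idx p) * α (idx p) x}) :
    Function.Injective idx ∧ k ≤ n := by
  have hne : ∀ (D : Set (Vsp ℓ)), IsChamber α D → D.Nonempty := by
    rintro D ⟨x, hx, rfl⟩
    exact ⟨x, mem_connectedComponentIn hx⟩
  have step : ∀ (m : Fin n) (p : Fin k), (∀ x ∈ C p.castSucc, 0 < ε m * α m x) →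
      ∀ x ∈ C p.succ, 0 < ε m * α m x := by
    intro m p h x hx
    obtain ⟨⟨h1, h2, h3, h4⟩, h5⟩ := hflow p
    by_cases hm : m = idx p
    · subst hm
      exact h5 hx
    · obtain ⟨y, hy⟩ := hne _ h1
      have hy' := h y hy
      rcases h4 m hm with ⟨ha, hb⟩ | ⟨ha, hb⟩ <;> have h6 := ha y hy <;> have h7 := hb x hx <;>
        rcases hε m with he | he <;> rw [he] at hy' ⊢ <;> linarith
  have mono : ∀ (m : Fin n) (a : ℕ) (b : ℕ), a ≤ b → ∀ (ha : a < k + 1) (hb : b < k + 1),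
      (∀ x ∈ C ⟨a, ha⟩, 0 < ε m * α m x) → ∀ x ∈ C ⟨b, hb⟩, 0 < ε m * α m x := by
    intro m a b hab
    induction b, hab using Nat.le_induction with
    | base => intro ha hb h; exact h
    | succ b hab ih =>
      intro ha hb h
      exact step m ⟨b, by omega⟩ (ih ha (by omega) h)
  have key : ∀ p q : Fin k, p < q → idx p ≠ idx q := by
    intro p q hpq heq
    obtain ⟨⟨h1, h2, h3, h4⟩, h5⟩ := hflow q
    have h6 := mono (idx p) (p.1 + 1) q.1 hpq (by omega) (by omega)
      (fun x hx => (hflow p).2 hx)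
    rw [heq] at h6
    obtain ⟨y, hy⟩ := hne _ h1
    obtain ⟨z, hz⟩ := hne _ h2
    have hy' := h6 y hy
    have hz' : 0 < ε (idx q) * α (idx q) z := h5 hz
    rcases h3 with ⟨ha, hb⟩ | ⟨ha, hb⟩ <;> have h8 := ha y hy <;> have h7 := hb z hz <;>
      rcases hε (idx q) with he | he <;> rw [he] at hy' hz' <;> linarith
  have inj : Function.Injective idx := by
    intro p q h
    rcases lt_trichotomy p q with h' | h' | h'
    · exact absurd h (key p q h')
    · exact h'
    · exact absurd h.symm (key q p h')
  exact ⟨inj, by simpa using Fintype.card_le_of_injective idx inj⟩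
end
end

section
/- The assignment ε ↦ ⋂_{i=1}^n H_i^{ε_i} is a bijection between the set of consistent sign vectors and the set of chambers. Precisely: let α_1,…,α_n be nonzero linear forms on ℝ^ℓ with ⋂_{i=1}^n ker α_i = {0}. Then the map sending a sign vector ε ∈ {+1,−1}^n with ⋂_{i=1}^n H_i^{ε_i} ≠ ∅ to the chamber ⋂_{i=1}^n H_i^{ε_i} is well defined and bijective onto the set of connected components of ℝ^ℓ ∖ ⋃_{i=1}^n H_i. -/
noncomputable section

theorem chamber_eq_aux {ℓ n : ℕ} (α : Fin n → (Vsp ℓ →ₗ[ℝ] ℝ)) (ε : Fin n → ℝ) (x : Vsp ℓ)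
    (hx : ∀ i, 0 < ε i * α i x) :
    (⋂ i, {x : Vsp ℓ | 0 < ε i * α i x}) = connectedComponentIn (cmpl α) x := by
  have hxc : x ∈ cmpl α := fun i h => by
    have := hx i
    simp [h] at this
  apply Set.Subset.antisymm
  · apply IsPreconnected.subset_connectedComponentIn
    · apply Convex.isPreconnected
      apply convex_iInter
      intro i
      exact convex_halfSpace_gt (f := fun y => ε i * α i y) (ε i • α i).isLinear 0
    · simpa using hx
    · intro y hy i h
      have := Set.mem_iInter.1 hy i
      simp [h] at this
  · intro y hy
    refine Set.mem_iInter.2 fun i => ?_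
    by_contra hneg
    have hneg' : ε i * α i y ≤ 0 := not_lt.1 hneg
    have hc : Continuous (fun y => ε i * α i y) :=
      continuous_const.mul (α i).continuous_of_finiteDimensional
    obtain ⟨z, hz, hz0⟩ := isPreconnected_connectedComponentIn.intermediate_value hy
      (mem_connectedComponentIn hxc) hc.continuousOn ⟨hneg', (hx i).le⟩
    rcases mul_eq_zero.1 hz0 with h | h
    · have := hx i
      simp [h] at this
    · exact connectedComponentIn_subset _ _ hz i h

/-- The map `ε ↦ ⋂ i, H_i^{ε_i}` is a bijection from the set of consistent sign vectors
onto the set of chambers. -/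
theorem consistent_signVectors_biject_chambers (ℓ n : ℕ) (α : Fin n → (Vsp ℓ →ₗ[ℝ] ℝ))
    (hα : ∀ i, α i ≠ 0)
    (hess : (⋂ i, (LinearMap.ker (α i) : Set (Vsp ℓ))) = {0}) :
    (∀ ε ∈ {ε : Fin n → ℝ | (∀ i, ε i = 1 ∨ ε i = -1) ∧
        (⋂ i, {x : Vsp ℓ | 0 < ε i * α i x}).Nonempty},
      IsChamber α (⋂ i, {x : Vsp ℓ | 0 < ε i * α i x})) ∧
    Set.BijOn (fun ε : Fin n → ℝ => ⋂ i, {x : Vsp ℓ | 0 < ε i * α i x})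
      {ε : Fin n → ℝ | (∀ i, ε i = 1 ∨ ε i = -1) ∧
        (⋂ i, {x : Vsp ℓ | 0 < ε i * α i x}).Nonempty}
      {C : Set (Vsp ℓ) | IsChamber α C} := by
  have h1 : ∀ ε ∈ {ε : Fin n → ℝ | (∀ i, ε i = 1 ∨ ε i = -1) ∧
        (⋂ i, {x : Vsp ℓ | 0 < ε i * α i x}).Nonempty},
      IsChamber α (⋂ i, {x : Vsp ℓ | 0 < ε i * α i x}) := by
    rintro ε ⟨-, x, hx⟩
    have hx' : ∀ i, 0 < ε i * α i x := fun i => Set.mem_iInter.1 hx i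
    refine ⟨x, fun i h => ?_, chamber_eq_aux α ε x hx'⟩
    have := hx' i
    simp [h] at this
  refine ⟨h1, h1, ?_, ?_⟩
  · rintro ε ⟨hε, x, hx⟩ δ ⟨hδ, -⟩ h
    have hx2 : x ∈ ⋂ i, {x : Vsp ℓ | 0 < δ i * α i x} := by
      beta_reduce at h
      rw [← h]
      exact hx
    funext i
    have a : 0 < ε i * α i x := Set.mem_iInter.1 hx i
    have b : 0 < δ i * α i x := Set.mem_iInter.1 hx2 i
    rcases hε i with e | e <;> rcases hδ i with d | d <;> rw [e] at a ⊢ <;> rw [d] at b ⊢ <;>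
      linarith
  · rintro C ⟨x, hx, rfl⟩
    have hs : ∀ i, 0 < (if 0 < α i x then (1 : ℝ) else -1) * α i x := by
      intro i
      have := hx i
      split_ifs with h
      · linarith
      · have := lt_of_le_of_ne (not_lt.1 h) this
        linarith
    refine ⟨fun i => if 0 < α i x then (1 : ℝ) else -1, ⟨fun i => ?_, x, Set.mem_iInter.2 hs⟩,
      chamber_eq_aux α _ x hs⟩
    by_cases h : 0 < α i x <;> simp [h]
end
end

section
/- A consistent system of half-spaces has a unique sink, namely the intersection of its half-spaces. Precisely: let α_1,…,α_n be nonzero linear forms on ℝ^ℓ with ⋂_{i=1}^n ker α_i = {0} and ε ∈ {+1,−1}^n with ⋂_{i=1}^n H_i^{ε_i} ≠ ∅. Then the chamber C₀ = ⋂_{i=1}^n H_i^{ε_i} is a sink for h(ε), and any chamber that is a sink for h(ε) equals C₀. -/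
noncomputable section

/-- `H_i = ker (α i)` is a wall of the chamber `C`:
`closure C ∩ H_i` spans `H_i` (equivalently, it has nonempty interior relative to `H_i`). -/
def IsWall {ℓ n : ℕ} (α : Fin n → (Vsp ℓ →ₗ[ℝ] ℝ)) (i : Fin n) (C : Set (Vsp ℓ)) : Prop :=
  Submodule.span ℝ (closure C ∩ {x | α i x = 0}) = LinearMap.ker (α i)

/-- `C` is a sink for the system of half-spaces determined by `ε`. -/
def IsSink {ℓ n : ℕ} (α : Fin n → (Vsp ℓ →ₗ[ℝ] ℝ)) (ε : Fin n → ℝ)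
    (C : Set (Vsp ℓ)) : Prop :=
  ∀ i : Fin n, IsWall α i C → C ⊆ {x | 0 < ε i * α i x}

theorem comp_eq_aux {ℓ n : ℕ} (α : Fin n → (Vsp ℓ →ₗ[ℝ] ℝ)) (x : Vsp ℓ) (hx : x ∈ cmpl α) :
    connectedComponentIn (cmpl α) x = {y | ∀ i, 0 < α i x * α i y} := by
  apply Set.Subset.antisymm
  · intro y hy i
    by_contra hneg
    have hpre := (isPreconnected_connectedComponentIn (F := cmpl α) (x := x))
    have hc : Continuous (fun w => α i x * α i w) :=
      continuous_const.mul (α i).continuous_of_finiteDimensional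
    have hiv := hpre.intermediate_value hy (mem_connectedComponentIn hx) hc.continuousOn
    obtain ⟨w, hw, hw0⟩ := hiv (show (0 : ℝ) ∈ _ from
      ⟨not_lt.mp hneg, mul_self_nonneg (α i x)⟩)
    have h2 := connectedComponentIn_subset _ _ hw
    exact (mul_ne_zero (hx i) (h2 i)) hw0
  · apply IsPreconnected.subset_connectedComponentIn
    · apply Convex.isPreconnected
      intro u hu v hv a b ha hb hab i
      have h1 := hu i
      have h2 := hv i
      have : α i x * α i (a • u + b • v) = a * (α i x * α i u) + b * (α i x * α i v) := by
        simp; ring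
      rw [this]
      rcases eq_or_lt_of_le ha with h | h
      · have : b = 1 := by linarith
        subst this; rw [← h]; linarith
      · have := mul_pos h h1
        have := mul_nonneg hb h2.le
        linarith
    · intro i
      exact mul_self_pos.mpr (hx i)
    · intro y hy i h0
      have := hy i
      rw [h0] at this
      simp at this

theorem generic_aux {ℓ : ℕ} {ι : Type} [Finite ι] (β : ι → (Vsp ℓ →ₗ[ℝ] ℝ)) (U : Set (Vsp ℓ))
    (hU : IsOpen U) (hne : U.Nonempty) : ∃ y ∈ U, ∀ i, β i ≠ 0 → β i y ≠ 0 := by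
  have hd : Dense (⋂ i, {y : Vsp ℓ | β i ≠ 0 → β i y ≠ 0}) := by
    have hcl : ∀ i, IsClosed {y : Vsp ℓ | β i y = 0} := fun i =>
      isClosed_eq (β i).continuous_of_finiteDimensional continuous_const
    apply dense_iInter_of_isOpen
    · intro i
      by_cases h : β i = 0
      · simp [h]
      · simp only [ne_eq, h, not_false_eq_true, forall_const]
        exact (hcl i).isOpen_compl
    · intro i
      by_cases h : β i = 0
      · simp [h]
      · have : {y : Vsp ℓ | β i ≠ 0 → β i y ≠ 0} = ((LinearMap.ker (β i) : Submodule ℝ (Vsp ℓ)) : Set (Vsp ℓ))ᶜ := by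
          ext y; simp [h]
        rw [this, ← interior_eq_empty_iff_dense_compl]
        by_contra hne
        have := Submodule.eq_top_of_nonempty_interior' _ (Set.nonempty_iff_ne_empty.mpr hne)
        exact h (LinearMap.ker_eq_top.mp this)
  obtain ⟨y, hy, hy2⟩ := hd.inter_open_nonempty U hU hne
  exact ⟨y, hy, fun i => Set.mem_iInter.mp hy2 i⟩

theorem closure_aux {ℓ n : ℕ} (α : Fin n → (Vsp ℓ →ₗ[ℝ] ℝ)) (x y : Vsp ℓ)
    (hy : ∀ i, 0 < α i x * α i y) (w : Vsp ℓ) (hw : ∀ i, 0 ≤ α i x * α i w) :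
    w ∈ closure {y | ∀ i, 0 < α i x * α i y} := by
  have hc : Continuous (fun s : ℝ => w + s • y) := by fun_prop
  have ht : Filter.Tendsto (fun s : ℝ => w + s • y) (nhdsWithin 0 (Set.Ioi 0)) (nhds w) := by
    have := hc.tendsto 0
    simp only [zero_smul, add_zero] at this
    exact this.mono_left nhdsWithin_le_nhds
  apply mem_closure_of_tendsto ht
  filter_upwards [self_mem_nhdsWithin] with s hs i
  have : α i x * α i (w + s • y) = α i x * α i w + s * (α i x * α i y) := by simp; ring
  rw [this]
  have := mul_pos (show (0:ℝ) < s from hs) (hy i)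
  have := hw i
  linarith

theorem wall_aux {ℓ n : ℕ} (α : Fin n → (Vsp ℓ →ₗ[ℝ] ℝ)) (x : Vsp ℓ) (hx : x ∈ cmpl α)
    (z : Vsp ℓ) (i : Fin n) (hi : α i z = 0)
    (hz : ∀ k, 0 < α k x * α k z ∨ (α k z = 0 ∧ ∀ v, α i v = 0 → α k v = 0)) :
    IsWall α i {y | ∀ i, 0 < α i x * α i y} := by
  have hself : ∀ i, 0 < α i x * α i x := fun i => mul_self_pos.mpr (hx i)
  have hzc : z ∈ closure {y | ∀ i, 0 < α i x * α i y} := by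
    apply closure_aux α x x hself
    intro k
    rcases hz k with h | h
    · exact h.le
    · simp [h.1]
  apply le_antisymm
  · rw [Submodule.span_le]
    rintro w ⟨-, hw⟩
    exact hw
  · intro v hv
    have hv : α i v = 0 := hv
    have hev : ∀ᶠ s : ℝ in nhdsWithin 0 (Set.Ioi 0), ∀ k, 0 ≤ α k x * α k (z + s • v) := by
      rw [Filter.eventually_all]
      intro k
      rcases hz k with h | h
      · have hc : Continuous (fun s : ℝ => α k x * (α k z + s * α k v)) := by fun_prop
        have := (hc.tendsto 0).eventually (lt_mem_nhds (a := 0) (by simpa using h))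
        filter_upwards [nhdsWithin_le_nhds this] with s hs
        simpa using hs.le
      · filter_upwards with s
        simp [h.1, h.2 v hv]
    obtain ⟨s, hs, hs0⟩ := (hev.and self_mem_nhdsWithin).exists
    have hs0 : (0:ℝ) < s := hs0
    have h1 := Submodule.subset_span (R := ℝ) (s := closure {y | ∀ i, 0 < α i x * α i y} ∩ {x | α i x = 0})
      ⟨closure_aux α x x hself _ hs, show α i (z + s • v) = 0 by simp [hi, hv]⟩
    have h2 := Submodule.subset_span (R := ℝ) (s := closure {y | ∀ i, 0 < α i x * α i y} ∩ {x | α i x = 0})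
      ⟨hzc, hi⟩
    have h3 := Submodule.smul_mem _ s⁻¹ (Submodule.sub_mem _ h1 h2)
    rwa [add_sub_cancel_left, inv_smul_smul₀ hs0.ne'] at h3

/-- A consistent system of half-spaces has a unique sink, namely the intersection
of its half-spaces. -/
theorem consistent_unique_sink (ℓ n : ℕ) (α : Fin n → (Vsp ℓ →ₗ[ℝ] ℝ))
    (hα : ∀ i, α i ≠ 0)
    (hess : (⋂ i, (LinearMap.ker (α i) : Set (Vsp ℓ))) = {0})
    (ε : Fin n → ℝ) (hε : ∀ i, ε i = 1 ∨ ε i = -1)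
    (hcons : (⋂ i, {x : Vsp ℓ | 0 < ε i * α i x}).Nonempty) :
    IsChamber α (⋂ i, {x : Vsp ℓ | 0 < ε i * α i x}) ∧
    IsSink α ε (⋂ i, {x : Vsp ℓ | 0 < ε i * α i x}) ∧
    ∀ C : Set (Vsp ℓ), IsChamber α C → IsSink α ε C →
      C = ⋂ i, {x : Vsp ℓ | 0 < ε i * α i x} := by
  have hC0 : ∀ p ∈ ⋂ i, {x : Vsp ℓ | 0 < ε i * α i x}, p ∈ cmpl α ∧
      (⋂ i, {x : Vsp ℓ | 0 < ε i * α i x}) = connectedComponentIn (cmpl α) p := by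
    intro p hp
    rw [Set.mem_iInter] at hp
    have hpc : p ∈ cmpl α := by
      intro i h
      have := hp i
      simp [h] at this
    refine ⟨hpc, ?_⟩
    rw [comp_eq_aux α p hpc]
    ext y
    simp only [Set.mem_iInter, Set.mem_setOf_eq]
    refine forall_congr' fun i => ?_
    have h := hp i
    simp only [Set.mem_setOf_eq] at h
    rcases hε i with e | e <;> rw [e] at h ⊢
    · rw [one_mul] at *
      exact (mul_pos_iff_of_pos_left h).symm
    · have h' : α i p < 0 := by linarith
      constructor
      · intro hy; exact mul_pos_of_neg_of_neg h' (by linarith)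
      · intro hy
        by_contra hcon
        nlinarith
  obtain ⟨p, hp⟩ := hcons
  obtain ⟨hpc, hpe⟩ := hC0 p hp
  have hpi : ∀ i, 0 < ε i * α i p := Set.mem_iInter.mp hp
  refine ⟨⟨p, hpc, hpe⟩, fun i _ => Set.iInter_subset _ i, ?_⟩
  rintro C ⟨x, hx, rfl⟩ hsink
  have hopen : IsOpen (connectedComponentIn (cmpl α) x) := by
    rw [comp_eq_aux α x hx, Set.setOf_forall]
    exact isOpen_iInter_of_finite fun i => isOpen_lt continuous_const
      (continuous_const.mul (α i).continuous_of_finiteDimensional)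
  obtain ⟨y, hy, hgen⟩ := generic_aux
    (fun q : Fin n × Fin n => α q.2 p • α q.1 - α q.1 p • α q.2) _ hopen
    ⟨x, mem_connectedComponentIn hx⟩
  have hyc : y ∈ cmpl α := connectedComponentIn_subset _ _ hy
  rw [connectedComponentIn_eq hy] at hsink ⊢
  by_cases hD : ∃ i, α i y * α i p < 0
  · exfalso
    obtain ⟨i0, hi0⟩ := hD
    let t : Fin n → ℝ := fun k => (α k y)^2 / ((α k y)^2 - α k y * α k p)
    obtain ⟨i, hiD, hmin⟩ := Finset.exists_min_image
      (Finset.univ.filter fun k => α k y * α k p < 0) t ⟨i0, by simpa using hi0⟩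
    simp only [Finset.mem_filter, Finset.mem_univ, true_and] at hiD hmin
    have hsq : ∀ k, 0 < (α k y)^2 := fun k => by have := hyc k; positivity
    set T := t i with hT
    have hden : 0 < (α i y)^2 - α i y * α i p := by linarith [hsq i]
    have hT0 : 0 < T := div_pos (hsq i) hden
    have hT1 : T < 1 := by
      rw [hT]; exact (div_lt_one hden).mpr (by linarith)
    have hzk : ∀ k, α k (y + T • (p - y)) = (1 - T) * α k y + T * α k p := by
      intro k; simp; ring
    have hiz : (1 - T) * α i y + T * α i p = 0 := by
      have h1 : T * ((α i y)^2 - α i y * α i p) = (α i y)^2 := div_mul_cancel₀ _ hden.ne'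
      apply mul_left_cancel₀ (hyc i)
      linear_combination -h1
    have hwall : IsWall α i (connectedComponentIn (cmpl α) y) := by
      rw [comp_eq_aux α y hyc]
      apply wall_aux α y hyc (y + T • (p - y)) i
      · rw [hzk, hiz]
      · intro k
        rw [hzk]
        have hge : 0 ≤ α k y * ((1 - T) * α k y + T * α k p) := by
          by_cases hk : α k y * α k p < 0
          · have hdk : 0 < (α k y)^2 - α k y * α k p := by linarith [hsq k]
            have := (le_div_iff₀ hdk).mp (hmin k hk)
            linarith
          · have h1 := mul_nonneg hT0.le (not_lt.mp hk)
            have h2 := mul_pos (sub_pos.mpr hT1) (hsq k)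
            linarith
        rcases hge.lt_or_eq with h | h
        · exact Or.inl h
        · right
          have hk0 : (1 - T) * α k y + T * α k p = 0 := by
            rcases mul_eq_zero.mp h.symm with h | h
            · exact absurd h (hyc k)
            · exact h
          refine ⟨hk0, fun v hv => ?_⟩
          have hb : α k p • α i - α i p • α k = 0 := by
            by_contra hb
            apply hgen (i, k) hb
            simp only [LinearMap.sub_apply, LinearMap.smul_apply, smul_eq_mul]
            apply mul_left_cancel₀ (sub_pos.mpr hT1).ne'
            linear_combination α k p * hiz - α i p * hk0
          have := LinearMap.congr_fun hb v
          simp only [LinearMap.sub_apply, LinearMap.smul_apply, smul_eq_mul, hv,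
            LinearMap.zero_apply, mul_zero, zero_sub, neg_eq_zero] at this
          exact (mul_eq_zero.mp this).resolve_left (hpc i)
    have h1 : 0 < ε i * α i y := hsink i hwall (mem_connectedComponentIn hyc)
    have h2 := mul_pos h1 (hpi i)
    have h3 : ε i * α i y * (ε i * α i p) = (ε i)^2 * (α i y * α i p) := by ring
    have h4 := mul_nonpos_of_nonneg_of_nonpos (sq_nonneg (ε i)) hiD.le
    linarith
  · push Not at hD
    rw [hpe]
    symm
    apply connectedComponentIn_eq
    rw [comp_eq_aux α p hpc]
    intro i
    rw [mul_comm]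
    exact lt_of_le_of_ne (hD i) (mul_ne_zero (hyc i) (hpc i)).symm
end
end

section
/- A locally consistent system of half-spaces admits a compatible vector field on the unit sphere. Precisely: let α_1,…,α_n be nonzero linear forms on ℝ^ℓ with ⋂_{i=1}^n ker α_i = {0}, and let ε ∈ {+1,−1}^n be such that for every intersection X = ⋂_{i∈I} ker α_i with X ≠ {0}, one has ⋂_{i : X ⊆ ker α_i} H_i^{ε_i} ≠ ∅. Then there exists a continuous map θ : S^{ℓ−1} → ℝ^ℓ such that for every x ∈ S^{ℓ−1} and every i with α_i(x) = 0, one has ε_i·α_i(θ(x)) > 0. -/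
noncomputable section

/-- The system of half-spaces determined by `ε` is consistent at the intersection
`X = ⋂ i ∈ I, ker (α i)`: the intersection of the half-spaces of all hyperplanes
containing `X` is nonempty. -/
def ConsistentAt {ℓ n : ℕ} (α : Fin n → (Vsp ℓ →ₗ[ℝ] ℝ)) (ε : Fin n → ℝ)
    (I : Finset (Fin n)) : Prop :=
  {x : Vsp ℓ | ∀ j : Fin n,
      (⋂ i ∈ I, (LinearMap.ker (α i) : Set (Vsp ℓ))) ⊆ (LinearMap.ker (α j) : Set (Vsp ℓ)) →
      0 < ε j * α j x}.Nonempty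

/-- The system of half-spaces is locally consistent: it is consistent at every
nonzero intersection of hyperplanes. -/
def LocallyConsistent {ℓ n : ℕ} (α : Fin n → (Vsp ℓ →ₗ[ℝ] ℝ)) (ε : Fin n → ℝ) : Prop :=
  ∀ I : Finset (Fin n),
    (⋂ i ∈ I, (LinearMap.ker (α i) : Set (Vsp ℓ))) ≠ {0} → ConsistentAt α ε I

/-- A locally consistent system of half-spaces admits a compatible vector field
on the unit sphere. -/
theorem exists_compatible_vector_field (ℓ n : ℕ) (α : Fin n → (Vsp ℓ →ₗ[ℝ] ℝ))
    (hα : ∀ i, α i ≠ 0)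
    (hess : (⋂ i, (LinearMap.ker (α i) : Set (Vsp ℓ))) = {0})
    (ε : Fin n → ℝ) (hε : ∀ i, ε i = 1 ∨ ε i = -1)
    (hloc : LocallyConsistent α ε) :
    ∃ θ : Metric.sphere (0 : Vsp ℓ) 1 → Vsp ℓ, Continuous θ ∧
      ∀ x : Metric.sphere (0 : Vsp ℓ) 1, ∀ i : Fin n,
        α i (x : Vsp ℓ) = 0 → 0 < ε i * α i (θ x) := by
  classical
  have key := exists_continuous_forall_mem_convex_of_local_const
    (X := Metric.sphere (0 : Vsp ℓ) 1) (E := Vsp ℓ)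
    (t := fun x => {v : Vsp ℓ | ∀ i : Fin n, α i (x : Vsp ℓ) = 0 → 0 < ε i * α i v}) ?_ ?_
  · obtain ⟨g, hg⟩ := key
    exact ⟨g, g.continuous, fun x => hg x⟩
  · intro x u hu v hv a b ha hb hab i hi
    have h1 := hu i hi
    have h2 := hv i hi
    have h3 : ε i * α i (a • u + b • v) = a * (ε i * α i u) + b * (ε i * α i v) := by
      simp only [map_add, map_smul, smul_eq_mul]; ring
    rw [h3]
    rcases ha.eq_or_lt with h | h
    · have : b = 1 := by linarith
      subst h; subst this; simpa using h2
    · have := mul_pos h h1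
      have := mul_nonneg hb h2.le
      linarith
  · intro x
    let I : Finset (Fin n) := Finset.univ.filter fun i => α i (x : Vsp ℓ) = 0
    have hxI : (x : Vsp ℓ) ∈ ⋂ i ∈ I, (LinearMap.ker (α i) : Set (Vsp ℓ)) := by
      simp [I]
    have hx0 : (x : Vsp ℓ) ≠ 0 := ne_zero_of_mem_unit_sphere x
    obtain ⟨c, hc⟩ := hloc I (fun h => hx0 (by rw [h] at hxI; exact hxI))
    refine ⟨c, ?_⟩
    have hev : ∀ i : Fin n, ∀ᶠ y : Metric.sphere (0 : Vsp ℓ) 1 in nhds x,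
        α i (y : Vsp ℓ) = 0 → 0 < ε i * α i c := by
      intro i
      by_cases hi : α i (x : Vsp ℓ) = 0
      · refine Filter.Eventually.of_forall fun y _ => hc i ?_
        exact Set.biInter_subset_of_mem (show i ∈ I by simp [I, hi])
      · have hcont : Continuous fun y : Metric.sphere (0 : Vsp ℓ) 1 => α i (y : Vsp ℓ) :=
          (LinearMap.continuous_of_finiteDimensional (α i)).comp continuous_subtype_val
        filter_upwards [hcont.continuousAt.eventually_ne hi] with y hy h
        exact absurd h hy
    exact Filter.eventually_all.2 hev
end
end

section
/- The homotopy class of the shifted sphere does not depend on the choice of compatible vector field. Precisely: let α_1,…,α_n be nonzero linear forms on ℝ^ℓ with ⋂_{i=1}^n ker α_i = {0} and ε ∈ {+1,−1}^n. If θ_0, θ_1 : S^{ℓ−1} → ℝ^ℓ are both continuous and compatible with h(ε), then the maps f_{θ_0}, f_{θ_1} : S^{ℓ−1} → M(A), f_{θ_j}(x) = x + √−1·θ_j(x), are homotopic as maps into M(A) (via the linear homotopy θ_t = (1−t)θ_0 + tθ_1). -/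
noncomputable section

/-- The point `x + √-1 · v` of `ℂ^ℓ` determined by the real vectors `x, v`. -/
def cplx {ℓ : ℕ} (x v : Vsp ℓ) : Fin ℓ → ℂ :=
  fun j => (x j : ℂ) + Complex.I * (v j : ℂ)

/-- The `ℂ`-linear extension of a real linear form, evaluated at `z ∈ ℂ^ℓ`:
`α^ℂ(z) = α(Re z) + √-1 · α(Im z)`. -/
def cLin {ℓ : ℕ} (α : Vsp ℓ →ₗ[ℝ] ℝ) (z : Fin ℓ → ℂ) : ℂ :=
  (α (WithLp.toLp 2 (fun j => (z j).re)) : ℂ) + Complex.I * (α (WithLp.toLp 2 (fun j => (z j).im)) : ℂ)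

/-- The complexified complement `M(A) ⊆ ℂ^ℓ`. -/
def MA {ℓ n : ℕ} (α : Fin n → (Vsp ℓ →ₗ[ℝ] ℝ)) : Set (Fin ℓ → ℂ) :=
  {z | ∀ i, cLin (α i) z ≠ 0}

/-- The homotopy class of the shifted sphere does not depend on the choice of the
compatible vector field: the maps `f_{θ₀}` and `f_{θ₁}` are homotopic
as maps into `M(A)`. -/
theorem shifted_sphere_homotopy_class_independent (ℓ n : ℕ)
    (α : Fin n → (Vsp ℓ →ₗ[ℝ] ℝ))
    (hα : ∀ i, α i ≠ 0)
    (hess : (⋂ i, (LinearMap.ker (α i) : Set (Vsp ℓ))) = {0})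
    (ε : Fin n → ℝ) (hε : ∀ i, ε i = 1 ∨ ε i = -1)
    (θ₀ θ₁ : Metric.sphere (0 : Vsp ℓ) 1 → Vsp ℓ)
    (hθ₀ : Continuous θ₀) (hθ₁ : Continuous θ₁)
    (hcomp₀ : ∀ x : Metric.sphere (0 : Vsp ℓ) 1, ∀ i : Fin n,
      α i (x : Vsp ℓ) = 0 → 0 < ε i * α i (θ₀ x))
    (hcomp₁ : ∀ x : Metric.sphere (0 : Vsp ℓ) 1, ∀ i : Fin n,
      α i (x : Vsp ℓ) = 0 → 0 < ε i * α i (θ₁ x)) :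
    ∀ f₀ f₁ : C(Metric.sphere (0 : Vsp ℓ) 1, MA α),
      (∀ x, (f₀ x : Fin ℓ → ℂ) = cplx (x : Vsp ℓ) (θ₀ x)) →
      (∀ x, (f₁ x : Fin ℓ → ℂ) = cplx (x : Vsp ℓ) (θ₁ x)) →
      f₀.Homotopic f₁ := by
  intro f₀ f₁ h₀ h₁
  have key : ∀ (t : unitInterval) (x : Metric.sphere (0 : Vsp ℓ) 1),
      cplx (x : Vsp ℓ) ((1 - (t : ℝ)) • θ₀ x + (t : ℝ) • θ₁ x) ∈ MA α := by
    intro t x i hz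
    have hre : (WithLp.toLp 2 (fun j => (cplx (x : Vsp ℓ)
        ((1 - (t : ℝ)) • θ₀ x + (t : ℝ) • θ₁ x) j).re) : Vsp ℓ) = (x : Vsp ℓ) := by
      ext j
      simp [cplx]
    have him : (WithLp.toLp 2 (fun j => (cplx (x : Vsp ℓ)
        ((1 - (t : ℝ)) • θ₀ x + (t : ℝ) • θ₁ x) j).im) : Vsp ℓ)
        = (1 - (t : ℝ)) • θ₀ x + (t : ℝ) • θ₁ x := by
      ext j
      simp [cplx]
    unfold cLin at hz
    rw [hre, him] at hz
    have hz1 := congrArg Complex.re hz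
    have hz2 := congrArg Complex.im hz
    simp only [Complex.add_re, Complex.add_im, Complex.mul_re, Complex.mul_im, Complex.I_re,
      Complex.I_im, Complex.ofReal_re, Complex.ofReal_im, Complex.zero_re, Complex.zero_im,
      zero_mul, one_mul, mul_zero, sub_zero, add_zero, zero_add] at hz1 hz2
    have p₀ := hcomp₀ x i hz1
    have p₁ := hcomp₁ x i hz1
    rw [map_add, map_smul, map_smul, smul_eq_mul, smul_eq_mul] at hz2
    have hsum : (1 - (t : ℝ)) * (ε i * α i (θ₀ x)) + (t : ℝ) * (ε i * α i (θ₁ x)) = 0 := by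
      linear_combination ε i * hz2
    have ht0 := t.2.1
    have ht1 := t.2.2
    rcases ht0.eq_or_lt with h | h
    · rw [← h] at hsum
      linarith
    · have := mul_pos h p₁
      have := mul_nonneg (sub_nonneg.2 ht1) p₀.le
      linarith
  refine ⟨⟨⟨fun p => ⟨_, key p.1 p.2⟩, ?_⟩, ?_, ?_⟩⟩
  · refine Continuous.subtype_mk ?_ _
    refine continuous_pi fun j => ?_
    unfold cplx
    simp only [PiLp.add_apply, PiLp.smul_apply]
    fun_prop
  · intro x
    apply Subtype.ext
    simp [h₀]
  · intro x
    apply Subtype.ext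
    simp [h₁]
end
end

section
/- If a system of half-spaces is globally consistent, the compatible vector field extends over the unit ball and the shifted sphere bounds a disk in the complexified complement. Precisely: let α_1,…,α_n be nonzero linear forms on ℝ^ℓ with ⋂_{i=1}^n ker α_i = {0}, let ε ∈ {+1,−1}^n with ⋂_{i=1}^n H_i^{ε_i} ≠ ∅, and let θ : S^{ℓ−1} → ℝ^ℓ be continuous and compatible with h(ε). Then there exists a continuous map θ̃ : D^ℓ → ℝ^ℓ extending θ such that ε_i·α_i(θ̃(x)) > 0 whenever x ∈ D^ℓ and α_i(x) = 0; consequently the map F(x) = x + √−1·θ̃(x) sends D^ℓ into M(A) and restricts to f_θ on S^{ℓ−1}, so f_θ : S^{ℓ−1} → M(A) is null-homotopic. -/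
noncomputable section

/-- Radial cone extension is continuous. -/
theorem cone_continuous {ℓ : ℕ} (p : Vsp ℓ) (Θ : Vsp ℓ → Vsp ℓ) (hΘ : Continuous Θ) :
    Continuous (fun x : Vsp ℓ => (1 - ‖x‖) • p + ‖x‖ • Θ (‖x‖⁻¹ • x)) := by
  refine Continuous.add (by fun_prop) ?_
  rw [continuous_iff_continuousAt]
  intro x
  by_cases hx : x = 0
  · subst hx
    obtain ⟨C, hC⟩ := (isCompact_closedBall (0 : Vsp ℓ) 1).exists_bound_of_continuousOn
      hΘ.continuousOn
    have hb : ∀ y : Vsp ℓ, ‖‖y‖ • Θ (‖y‖⁻¹ • y)‖ ≤ ‖y‖ * C := by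
      intro y
      rw [norm_smul, norm_norm]
      refine mul_le_mul_of_nonneg_left (hC _ ?_) (norm_nonneg _)
      rw [mem_closedBall_zero_iff, norm_smul, norm_inv, norm_norm]
      exact inv_mul_le_one
    unfold ContinuousAt
    simp only [norm_zero, zero_smul]
    refine squeeze_zero_norm hb ?_
    have : Continuous (fun y : Vsp ℓ => ‖y‖ * C) := by fun_prop
    simpa using this.tendsto 0
  · have hx' : ‖x‖ ≠ 0 := norm_ne_zero_iff.mpr hx
    refine continuous_norm.continuousAt.smul ?_
    refine ContinuousAt.comp (f := fun y : Vsp ℓ => ‖y‖⁻¹ • y) hΘ.continuousAt ?_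
    exact (continuous_norm.continuousAt.inv₀ hx').smul continuousAt_id

theorem cLin_cplx {ℓ : ℕ} (a : Vsp ℓ →ₗ[ℝ] ℝ) (x v : Vsp ℓ) :
    cLin a (cplx x v) = (a x : ℂ) + Complex.I * (a v : ℂ) := by
  simp [cLin, cplx]

theorem cplx_mem {ℓ n : ℕ} (α : Fin n → (Vsp ℓ →ₗ[ℝ] ℝ)) (ε : Fin n → ℝ) (x v : Vsp ℓ)
    (h : ∀ i, α i x = 0 → 0 < ε i * α i v) : cplx x v ∈ MA α := by
  intro i h0
  rw [cLin_cplx] at h0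
  have h1 := congrArg Complex.re h0
  have h2 := congrArg Complex.im h0
  simp at h1 h2
  have := h i h1
  simp [h2] at this

/-- If the system of half-spaces is globally consistent, a compatible vector field
extends over the unit ball, and the shifted sphere bounds a disk in the complexified
complement; in particular `f_θ` is null-homotopic in `M(A)`. -/
theorem consistent_implies_nullhomotopic (ℓ n : ℕ)
    (α : Fin n → (Vsp ℓ →ₗ[ℝ] ℝ))
    (hα : ∀ i, α i ≠ 0)
    (hess : (⋂ i, (LinearMap.ker (α i) : Set (Vsp ℓ))) = {0})
    (ε : Fin n → ℝ) (hε : ∀ i, ε i = 1 ∨ ε i = -1)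
    (hcons : (⋂ i, {x : Vsp ℓ | 0 < ε i * α i x}).Nonempty)
    (θ : Metric.sphere (0 : Vsp ℓ) 1 → Vsp ℓ) (hθ : Continuous θ)
    (hcomp : ∀ x : Metric.sphere (0 : Vsp ℓ) 1, ∀ i : Fin n,
      α i (x : Vsp ℓ) = 0 → 0 < ε i * α i (θ x)) :
    (∃ θext : Metric.closedBall (0 : Vsp ℓ) 1 → Vsp ℓ,
      Continuous θext ∧
      (∀ x : Metric.sphere (0 : Vsp ℓ) 1,
        θext ⟨(x : Vsp ℓ), Metric.sphere_subset_closedBall x.2⟩ = θ x) ∧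
      (∀ x : Metric.closedBall (0 : Vsp ℓ) 1, ∀ i : Fin n,
        α i (x : Vsp ℓ) = 0 → 0 < ε i * α i (θext x)) ∧
      (∀ x : Metric.closedBall (0 : Vsp ℓ) 1, cplx (x : Vsp ℓ) (θext x) ∈ MA α)) ∧
    (∀ f : C(Metric.sphere (0 : Vsp ℓ) 1, MA α),
      (∀ x, (f x : Fin ℓ → ℂ) = cplx (x : Vsp ℓ) (θ x)) →
      ∃ c : MA α, f.Homotopic (ContinuousMap.const _ c)) := by
  obtain ⟨p, hp⟩ := hcons
  simp only [Set.mem_iInter, Set.mem_setOf_eq] at hp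
  obtain ⟨Θ, hΘ⟩ := ContinuousMap.exists_restrict_eq (Metric.isClosed_sphere (x := (0 : Vsp ℓ)) (ε := 1))
    (⟨θ, hθ⟩ : C(Metric.sphere (0 : Vsp ℓ) 1, Vsp ℓ))
  have hΘ' : ∀ x : Metric.sphere (0 : Vsp ℓ) 1, Θ x = θ x := fun x => DFunLike.congr_fun hΘ x
  obtain ⟨T, hTdef⟩ : ∃ T : Vsp ℓ → Vsp ℓ,
      T = fun x => (1 - ‖x‖) • p + ‖x‖ • Θ (‖x‖⁻¹ • x) := ⟨_, rfl⟩
  have hTc : Continuous T := hTdef ▸ cone_continuous p Θ Θ.continuous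
  have hTs : ∀ x : Metric.sphere (0 : Vsp ℓ) 1, T x = θ x := by
    intro x
    have hx : ‖(x : Vsp ℓ)‖ = 1 := mem_sphere_zero_iff_norm.mp x.2
    simp [hTdef, hx, hΘ']
  have hTp : ∀ x : Vsp ℓ, ‖x‖ ≤ 1 → ∀ i, α i x = 0 → 0 < ε i * α i (T x) := by
    intro x hx i hi
    have e : ε i * α i (T x) =
        (1 - ‖x‖) * (ε i * α i p) + ‖x‖ * (ε i * α i (Θ (‖x‖⁻¹ • x))) := by
      simp only [hTdef, map_add, map_smul, smul_eq_mul]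
      ring
    rw [e]
    by_cases h0 : x = 0
    · simpa [h0] using hp i
    · have hn : 0 < ‖x‖ := norm_pos_iff.mpr h0
      have hs : ‖x‖⁻¹ • x ∈ Metric.sphere (0 : Vsp ℓ) 1 := by
        rw [mem_sphere_zero_iff_norm, norm_smul, norm_inv, norm_norm, inv_mul_cancel₀ hn.ne']
      have h1 := hcomp ⟨_, hs⟩ i (by simp [hi])
      rw [← hΘ'] at h1
      have h2 := mul_pos hn h1
      have h3 := mul_nonneg (sub_nonneg.mpr hx) (hp i).le
      simp only at h2
      linarith
  have hTM : ∀ x : Vsp ℓ, ‖x‖ ≤ 1 → cplx x (T x) ∈ MA α := fun x hx =>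
    cplx_mem α ε x (T x) (hTp x hx)
  have hFc : Continuous (fun x : Vsp ℓ => cplx x (T x)) := by
    unfold cplx
    fun_prop
  refine ⟨⟨fun x => T x, hTc.comp continuous_subtype_val, hTs, fun x => hTp x ?_,
    fun x => hTM x ?_⟩, ?_⟩
  · exact mem_closedBall_zero_iff.mp x.2
  · exact mem_closedBall_zero_iff.mp x.2
  intro f hf
  have hb : ∀ q : unitInterval × Metric.sphere (0 : Vsp ℓ) 1,
      ‖(1 - (q.1 : ℝ)) • (q.2 : Vsp ℓ)‖ ≤ 1 := by
    rintro ⟨t, x⟩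
    rw [norm_smul, mem_sphere_zero_iff_norm.mp x.2, mul_one, Real.norm_eq_abs, abs_le]
    constructor <;> linarith [t.2.1, t.2.2]
  refine ⟨⟨cplx 0 (T 0), hTM 0 (by simp)⟩, ⟨⟨⟨fun q => ⟨_, hTM _ (hb q)⟩, ?_⟩, ?_, ?_⟩⟩⟩
  · refine Continuous.subtype_mk (hFc.comp (f := fun q : unitInterval × Metric.sphere (0 : Vsp ℓ) 1 =>
      (1 - (q.1 : ℝ)) • (q.2 : Vsp ℓ)) ?_) _
    fun_prop
  · intro x
    apply Subtype.ext
    simp [hf, hTs]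
  · intro x
    apply Subtype.ext
    simp
end
end

section
/- In the group G presented by generators γ_1,…,γ_6 subject to the relations [γ_2,γ_3] = [γ_4,γ_5] = [γ_2,γ_5] = [γ_1,γ_6] = [γ_3,γ_6] = [γ_1,γ_4] = 1, γ_1γ_3γ_5 = γ_3γ_5γ_1 = γ_5γ_1γ_3, and γ_2γ_4γ_6 = γ_4γ_6γ_2 = γ_6γ_2γ_4, the three elements γ_2, [γ_3, γ_4], and γ_5 pairwise commute. -/
noncomputable section

open FreeGroup
open scoped commutatorElement

/-- Generators `γ_1, …, γ_6` of the free group, indexed by `Fin 6`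
(`γ_(i+1)` corresponds to index `i`). -/
def gen (i : Fin 6) : FreeGroup (Fin 6) := FreeGroup.of i

/-- The relators of the presentation of `π_1(M(X_2))`: the six commutators
`[γ_2,γ_3], [γ_4,γ_5], [γ_2,γ_5], [γ_1,γ_6], [γ_3,γ_6], [γ_1,γ_4]` and the relators
expressing `γ_1γ_3γ_5 = γ_3γ_5γ_1 = γ_5γ_1γ_3` and `γ_2γ_4γ_6 = γ_4γ_6γ_2 = γ_6γ_2γ_4`. -/
def X2rels : Set (FreeGroup (Fin 6)) :=
  {⁅gen 1, gen 2⁆, ⁅gen 3, gen 4⁆, ⁅gen 1, gen 4⁆,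
   ⁅gen 0, gen 5⁆, ⁅gen 2, gen 5⁆, ⁅gen 0, gen 3⁆,
   (gen 0 * gen 2 * gen 4) * (gen 2 * gen 4 * gen 0)⁻¹,
   (gen 0 * gen 2 * gen 4) * (gen 4 * gen 0 * gen 2)⁻¹,
   (gen 1 * gen 3 * gen 5) * (gen 3 * gen 5 * gen 1)⁻¹,
   (gen 1 * gen 3 * gen 5) * (gen 5 * gen 1 * gen 3)⁻¹}

/-- The group presented by `γ_1, …, γ_6` and the above relators. -/
abbrev X2Group : Type := PresentedGroup X2rels

/-- The group-theoretic core: `γ_2` commutes with `[γ_3,γ_4]`, since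
`γ_4⁻¹ γ_2 γ_4 = γ_6 γ_2 γ_6⁻¹` commutes with `γ_3`. -/
theorem core_left {G : Type*} [Group G] {b c d f : G} (hbc : Commute b c) (hcf : Commute c f)
    (h : b * d * f = d * f * b) : Commute b ⁅c, d⁆ := by
  have h1 : d⁻¹ * b * d = f * b * f⁻¹ := by
    have : b * d = d * f * b * f⁻¹ := by rw [← h]; group
    rw [mul_assoc, this]; group
  have h2 : Commute (d⁻¹ * b * d) c := by
    rw [h1]
    exact (hcf.symm.mul_left hbc).mul_left hcf.symm.inv_left
  have h3 : Commute b (d * c * d⁻¹) := by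
    have := (Commute.conj_iff d).2 h2
    have e : d * (d⁻¹ * b * d) * d⁻¹ = b := by group
    rwa [e] at this
  have e : ⁅c, d⁆ = c * (d * c * d⁻¹)⁻¹ := by rw [commutatorElement_def]; group
  rw [e]
  exact hbc.mul_right h3.inv_right

/-- `γ_5` commutes with `[γ_3,γ_4]`, since `γ_3⁻¹ γ_5 γ_3` lies in the subgroup
generated by `γ_1, γ_5`, which commutes with `γ_4`. -/
theorem core_right {G : Type*} [Group G] {a c d e : G} (hde : Commute d e) (had : Commute a d)
    (h1 : a * c * e = c * e * a) (h2 : a * c * e = e * a * c) : Commute ⁅c, d⁆ e := by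
  have h3 : c⁻¹ * e * c = e * a * e * a⁻¹ * e⁻¹ := by
    have k : c * (e * a) = e * a * c := by rw [← mul_assoc, ← h1, h2]
    have k2 : e * (a * c) = a * c * e := by rw [← mul_assoc, h2]
    have k3 : c * (e * a * e * a⁻¹ * e⁻¹) = e * c := by
      calc c * (e * a * e * a⁻¹ * e⁻¹) = c * (e * a) * e * a⁻¹ * e⁻¹ := by group
        _ = e * (a * c * e) * a⁻¹ * e⁻¹ := by rw [k]; group
        _ = e * c := by rw [h1]; group
    rw [mul_assoc, ← k3]; group
  have h4 : Commute d (c⁻¹ * e * c) := by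
    rw [h3]
    exact (((hde.mul_right had.symm).mul_right hde).mul_right had.symm.inv_right).mul_right
      hde.inv_right
  have h5 : Commute (c * d * c⁻¹) e := by
    have := (Commute.conj_iff c).2 h4
    have e' : c * (c⁻¹ * e * c) * c⁻¹ = e := by group
    rwa [e'] at this
  rw [commutatorElement_def]
  exact h5.mul_left hde.inv_left

theorem rel_comm {i j : Fin 6} (h : ⁅gen i, gen j⁆ ∈ X2rels) :
    Commute (PresentedGroup.of (rels := X2rels) i) (PresentedGroup.of (rels := X2rels) j) := by
  have := PresentedGroup.one_of_mem h
  rw [map_commutatorElement] at this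
  exact commutatorElement_eq_one_iff_commute.1 this

theorem rel_triple {i j k l m n : Fin 6}
    (h : (gen i * gen j * gen k) * (gen l * gen m * gen n)⁻¹ ∈ X2rels) :
    PresentedGroup.of (rels := X2rels) i * PresentedGroup.of j * PresentedGroup.of k =
      PresentedGroup.of l * PresentedGroup.of m * PresentedGroup.of n := by
  have := PresentedGroup.one_of_mem h
  rw [_root_.map_mul, _root_.map_inv, mul_inv_eq_one] at this
  simp only [_root_.map_mul] at this
  exact this

/-- In the presented group `G`, the three elements `γ_2`, `[γ_3, γ_4]` and `γ_5`
pairwise commute. -/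
theorem gamma2_comm34_gamma5_pairwise_commute :
    Commute (PresentedGroup.of (rels := X2rels) 1)
      ⁅PresentedGroup.of (rels := X2rels) 2, PresentedGroup.of (rels := X2rels) 3⁆ ∧
    Commute (PresentedGroup.of (rels := X2rels) 1)
      (PresentedGroup.of (rels := X2rels) 4) ∧
    Commute ⁅PresentedGroup.of (rels := X2rels) 2, PresentedGroup.of (rels := X2rels) 3⁆
      (PresentedGroup.of (rels := X2rels) 4) := by
  refine ⟨core_left (f := PresentedGroup.of 5) (rel_comm ?_) (rel_comm ?_) (rel_triple ?_),
    rel_comm ?_,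
    core_right (a := PresentedGroup.of 0) (rel_comm ?_) (rel_comm ?_) (rel_triple ?_)
      (rel_triple ?_)⟩ <;> simp [X2rels]
end
end
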